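/- arXiv:2406.09962 — 6 statements merged into one kernel-verified Lean document; each statement's English description precedes it below -/
import Mathlib

section
/- Let N ≥ 1 and let G be a subgroup of the permutation group of Fin N. For α ∈ G let U_α be the permutation matrix on the index set (Fin N → Fin 2) of the bijection x ↦ x ∘ α. Then the set {A ∈ SU(2^N) : U_α A U_α⁻¹ = A for all α ∈ G} is path-connected. -/
open Matrix

/-- The permutation matrix on the index set `I → Fin 2` associated to a permutation `α` of
`I`, corresponding to the bijection `x ↦ x ∘ α`: its `(x, y)` entry is `1` if `y = x ∘ α`
and `0` otherwise. -/
def qubitPermMatrix {I : Type*} [DecidableEq I] [Fintype I] (α : Equiv.Perm I) :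
    Matrix (I → Fin 2) (I → Fin 2) ℂ :=
  Matrix.of fun x y => if y = x ∘ α then 1 else 0

/-!
Let `P` be the orthogonal projection onto a line fixed by the symmetry group. Since `P` commutes
with the symmetries and `1 + (c - 1) P` is unitary of determinant `c`,
`A ↦ A (1 + (star (det A) - 1) P)` is a retraction of the symmetric unitary matrices onto the
symmetric special unitary matrices. The former are path-connected: a unitary matrix `u` has finite
spectrum, hence a self-adjoint logarithm `a` that commutes with everything `u` commutes with, and
`t ↦ exp (i t a)` joins `1` to `u` inside the commutant. For qubit permutations, the line is spanned
by the basis vector of the constant word `0`.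
-/

section ExpUnitary

open selfAdjoint

variable {A : Type*} [NormedRing A] [NormedAlgebra ℂ A] [StarRing A] [ContinuousStar A]
  [CompleteSpace A] [StarModule ℂ A]

lemma commute_expUnitary_left {a : selfAdjoint A} {b : A} (h : Commute (a : A) b) :
    Commute (expUnitary a : A) b := by
  let +nondep : NormedAlgebra ℚ A := .restrictScalars ℚ ℂ A
  exact (h.smul_left Complex.I).exp_left

lemma expUnitary_real_smul_one (θ : ℝ) :
    (expUnitary (θ • (1 : selfAdjoint A)) : A) = (Circle.exp θ : ℂ) • (1 : A) := by
  have hθ : (Complex.I • (θ • (1 : selfAdjoint A)).val : A) = algebraMap ℂ A (θ * Complex.I) := by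
    simp [Algebra.algebraMap_eq_smul_one, mul_comm, mul_smul]
  rw [expUnitary_coe, hθ, ← NormedSpace.algebraMap_exp_comm, ← Complex.exp_eq_exp_ℂ,
    ← Circle.coe_exp, Algebra.algebraMap_eq_smul_one]

end ExpUnitary

section CStarAlgebra

open selfAdjoint Unitary

variable {A : Type*} [CStarAlgebra A]

lemma commute_argSelfAdjoint_left {u : unitary A} {b : A} (h : Commute (u : A) b) :
    Commute (argSelfAdjoint u : A) b :=
  h.cfc ((inferInstance : IsStarNormal (u : A)).commute_star_left h) _

-- Rotating `z` to `-1` makes the principal branch of the argument continuous on the spectrum.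
lemma exists_expUnitary_eq_of_notMem_spectrum {u : unitary A} {z : Circle}
    (hz : (z : ℂ) ∉ spectrum ℂ (u : A)) :
    ∃ a : selfAdjoint A, expUnitary a = u ∧ ∀ b, Commute (u : A) b → Commute (a : A) b := by
  obtain ⟨θ, hθ⟩ := Circle.exp_surjective (-z)
  set s : selfAdjoint A := θ • 1
  have commute_s (b : A) : Commute (s : A) b := (Commute.one_left b).smul_left θ
  set w : unitary A := (expUnitary s)⁻¹ * u with hw
  have smul_w : (u : A) = ((-z : Circle) : ℂ) • (w : A) := by
    rw [← hθ, ← smul_one_mul, ← expUnitary_real_smul_one, ← Submonoid.coe_mul, hw,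
      mul_inv_cancel_left]
  have commute_w {b : A} (hb : Commute (u : A) b) : Commute (w : A) b := by
    rwa [smul_w, Commute.smul_left_iff₀ (Circle.coe_ne_zero _)] at hb
  have norm_w : ‖(w - 1 : A)‖ < 2 := by
    rw [norm_sub_one_lt_two_iff w.2]
    intro h
    apply hz
    rw [smul_w]
    simpa using (spectrum.smul_mem_smul_iff (r := Circle.toUnits (-z))).mpr h
  refine ⟨s + argSelfAdjoint w, ?_, fun b hb ↦
    (commute_s b).add_left (commute_argSelfAdjoint_left (commute_w hb))⟩
  rw [(commute_s _).expUnitary_add, expUnitary_argSelfAdjoint norm_w, hw, mul_inv_cancel_left]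

lemma joinedIn_unitary_inter_centralizer {S : Set A} {u : A}
    (hu : u ∈ (unitary A : Set A) ∩ S.centralizer) {z : Circle} (hz : (z : ℂ) ∉ spectrum ℂ u) :
    JoinedIn ((unitary A : Set A) ∩ S.centralizer) 1 u := by
  obtain ⟨a, ha, commute_a⟩ := exists_expUnitary_eq_of_notMem_spectrum (u := ⟨u, hu.1⟩) hz
  refine JoinedIn.ofLine (f := fun t : ℝ ↦ (expUnitary (t • a) : A))
    (continuous_subtype_val.comp <| continuous_expUnitary.comp <|
      continuous_id.smul continuous_const).continuousOn (by simp) (by simp [ha]) ?_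
  rintro _ ⟨t, -, rfl⟩
  exact ⟨(expUnitary _).2, fun b hb ↦ (commute_expUnitary_left
    ((commute_a b (hu.2 b hb).symm).smul_left t)).symm⟩

end CStarAlgebra

open scoped Matrix.Norms.L2Operator in
lemma isPathConnected_unitaryGroup_inter_centralizer {n : Type*} [Fintype n]
    [DecidableEq n] (S : Set (Matrix n n ℂ)) :
    IsPathConnected ((unitaryGroup n ℂ : Set (Matrix n n ℂ)) ∩ S.centralizer) := by
  refine ⟨1, ⟨one_mem _, Set.one_mem_centralizer⟩, fun {u} hu ↦ ?_⟩
  obtain ⟨z, hz⟩ : ∃ z : Circle, (z : ℂ) ∉ spectrum ℂ u := by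
    have : Nontrivial Circle := ⟨1, -1, by simp [Circle.ext_iff, eq_neg_iff_add_eq_zero]⟩
    have : Infinite Circle := PreconnectedSpace.infinite
    have finite_preimage : {z : Circle | (z : ℂ) ∈ spectrum ℂ u}.Finite :=
      u.finite_spectrum.preimage Circle.coe_injective.injOn
    exact finite_preimage.exists_notMem
  exact joinedIn_unitary_inter_centralizer hu hz

lemma one_add_sub_one_smul_mem_unitary {R A : Type*} [CommRing R] [StarRing R] [Ring A]
    [StarRing A] [Algebra R A] [StarModule R A] {c : R} (hc : c ∈ unitary R) {p : A}
    (hp : IsStarProjection p) : 1 + (c - 1) • p ∈ unitary A := by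
  have key {a b : R} (hab : a * b = 1) : (1 + (a - 1) • p) * (1 + (b - 1) • p) = 1 := by
    calc (1 + (a - 1) • p) * (1 + (b - 1) • p)
        = 1 + (a * b - 1) • p := by
          simp only [mul_add, add_mul, one_mul, mul_one, smul_mul_smul_comm,
            hp.isIdempotentElem.eq]
          module
      _ = 1 := by rw [hab, sub_self, zero_smul, add_zero]
  rw [Unitary.mem_iff]
  simp [hp.isSelfAdjoint.star_eq, key, hc]

section Matrix

variable {n R : Type*} [CommRing R] [StarRing R]

section LinePhase

variable [DecidableEq n]

/-- The matrix acting as the scalar `c` on the line spanned by the unit vector `v` and as the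
identity on its orthogonal complement; it corrects determinants by the factor `c`. -/
def linePhase (v : n → R) (c : R) : Matrix n n R :=
  1 + (c - 1) • vecMulVec v (star v)

lemma linePhase_one (v : n → R) : linePhase v 1 = 1 := by
  simp [linePhase]

lemma continuous_linePhase [TopologicalSpace R] [IsTopologicalRing R]
    (v : n → R) : Continuous (linePhase v) := by
  unfold linePhase
  fun_prop

end LinePhase

variable [Fintype n]

lemma isStarProjection_vecMulVec_star {v : n → R} (hv : star v ⬝ᵥ v = 1) :
    IsStarProjection (vecMulVec v (star v)) where
  isIdempotentElem := by
    rw [IsIdempotentElem, vecMulVec_mul_vecMulVec, hv, one_smul]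
  isSelfAdjoint := by
    rw [IsSelfAdjoint, star_eq_conjTranspose, conjTranspose_vecMulVec, star_star]

variable [DecidableEq n]

lemma det_one_add_smul_vecMulVec {R : Type*} [CommRing R] (r : R) (u v : n → R) :
    (1 + r • vecMulVec u v).det = 1 + r * (v ⬝ᵥ u) := by
  rw [← smul_vecMulVec, vecMulVec_eq Unit, det_one_add_replicateCol_mul_replicateRow,
    dotProduct_smul, smul_eq_mul]

lemma det_linePhase {v : n → R} (hv : star v ⬝ᵥ v = 1) (c : R) : (linePhase v c).det = c := by
  rw [linePhase, det_one_add_smul_vecMulVec, hv, mul_one, add_sub_cancel]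

lemma linePhase_mem_unitaryGroup {v : n → R} (hv : star v ⬝ᵥ v = 1) {c : R}
    (hc : c ∈ unitary R) : linePhase v c ∈ unitaryGroup n R :=
  one_add_sub_one_smul_mem_unitary hc (isStarProjection_vecMulVec_star hv)

lemma linePhase_mem_centralizer {S : Set (Matrix n n R)} {v : n → R}
    (hS : vecMulVec v (star v) ∈ S.centralizer) (c : R) : linePhase v c ∈ S.centralizer :=
  Set.add_mem_centralizer Set.one_mem_centralizer fun M hM ↦
    (Commute.smul_right (hS M hM) (c - 1)).eq

/-- The determinant correction along the unit vector `v`, which retracts unitary matrices onto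
special unitary ones. -/
def detRetraction (v : n → R) (A : Matrix n n R) : Matrix n n R :=
  A * linePhase v (star A.det)

lemma detRetraction_eq_self (v : n → R) {A : Matrix n n R} (hA : A.det = 1) :
    detRetraction v A = A := by
  rw [detRetraction, hA, star_one, linePhase_one, mul_one]

lemma continuous_detRetraction [TopologicalSpace R] [IsTopologicalRing R]
    [ContinuousStar R] (v : n → R) : Continuous (detRetraction v) :=
  continuous_id.mul ((continuous_linePhase v).comp continuous_id.matrix_det.star)

lemma detRetraction_mem_specialUnitaryGroup {v : n → R} (hv : star v ⬝ᵥ v = 1)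
    {A : Matrix n n R} (hA : A ∈ unitaryGroup n R) :
    detRetraction v A ∈ specialUnitaryGroup n R := by
  have hdet : A.det ∈ unitary R := det_of_mem_unitary hA
  refine mem_specialUnitaryGroup_iff.mpr
    ⟨mul_mem hA (linePhase_mem_unitaryGroup hv (Unitary.star_mem hdet)), ?_⟩
  rw [detRetraction, det_mul, det_linePhase hv, Unitary.mul_star_self_of_mem hdet]

lemma detRetraction_image_unitaryGroup_inter_centralizer {S : Set (Matrix n n R)} {v : n → R}
    (hv : star v ⬝ᵥ v = 1) (hS : vecMulVec v (star v) ∈ S.centralizer) :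
    detRetraction v '' ((unitaryGroup n R : Set (Matrix n n R)) ∩ S.centralizer) =
      (specialUnitaryGroup n R : Set (Matrix n n R)) ∩ S.centralizer := by
  apply Set.Subset.antisymm
  · rintro _ ⟨A, ⟨hA, hAS⟩, rfl⟩
    exact ⟨detRetraction_mem_specialUnitaryGroup hv hA,
      Set.mul_mem_centralizer hAS (linePhase_mem_centralizer hS _)⟩
  · rintro A ⟨hA, hAS⟩
    obtain ⟨hAU, hdet⟩ := mem_specialUnitaryGroup_iff.mp hA
    exact ⟨A, ⟨hAU, hAS⟩, detRetraction_eq_self v hdet⟩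

theorem GSU_isPathConnected_general {S : Set (Matrix n n ℂ)} {v : n → ℂ}
    (hv : star v ⬝ᵥ v = 1) (hS : vecMulVec v (star v) ∈ S.centralizer) :
    IsPathConnected ((specialUnitaryGroup n ℂ : Set (Matrix n n ℂ)) ∩ S.centralizer) := by
  rw [← detRetraction_image_unitaryGroup_inter_centralizer hv hS]
  exact (isPathConnected_unitaryGroup_inter_centralizer S).image (continuous_detRetraction v)

lemma commute_permMatrix_vecMulVec_single {σ : Equiv.Perm n} {x : n} (hx : σ x = x) :
    Commute (σ.permMatrix R) (vecMulVec (Pi.single x 1) (star (Pi.single x 1))) := by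
  have hx' : σ.symm x = x := σ.symm_apply_eq.mpr hx.symm
  rw [Commute, SemiconjBy, mul_vecMulVec, vecMulVec_mul, permMatrix_mulVec, Pi.star_single,
    vecMul_permMatrix, Pi.single_comp_equiv, Pi.single_comp_equiv, Equiv.symm_symm, hx, hx']

lemma conj_eq_self_iff_commute {R : Type*} [CommRing R] {U : Matrix n n R} (hU : IsUnit U.det)
    (A : Matrix n n R) : U * A * U⁻¹ = A ↔ Commute U A := by
  let := U.invertibleOfIsUnitDet hU
  exact mul_inv_eq_iff_eq_mul_of_invertible U (U * A) A

end Matrix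

section Qubit

variable {I : Type*} [DecidableEq I] [Fintype I]

lemma qubitPermMatrix_eq_permMatrix (α : Equiv.Perm I) :
    qubitPermMatrix α = Equiv.Perm.permMatrix ℂ (α.symm.arrowCongr (.refl (Fin 2))) := by
  ext x y
  simp only [qubitPermMatrix, of_apply, PEquiv.toMatrix_apply, Equiv.toPEquiv_apply,
    Option.mem_def, eq_comm, Option.some.injEq]
  rfl

lemma isUnit_det_qubitPermMatrix (α : Equiv.Perm I) : IsUnit (qubitPermMatrix α).det := by
  rw [qubitPermMatrix_eq_permMatrix, det_permutation]
  exact (Equiv.Perm.sign _).isUnit.map (Int.castRingHom ℂ)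

lemma vecMulVec_single_zero_mem_centralizer (S : Set (Equiv.Perm I)) :
    vecMulVec (Pi.single 0 1) (star (Pi.single 0 1)) ∈
      (qubitPermMatrix '' S).centralizer := by
  rintro _ ⟨α, -, rfl⟩
  rw [qubitPermMatrix_eq_permMatrix]
  exact commute_permMatrix_vecMulVec_single rfl

lemma setOf_qubitPermMatrix_conj_eq (S : Set (Equiv.Perm I)) :
    {A | A * Aᴴ = 1 ∧ A.det = 1 ∧
        ∀ α ∈ S, qubitPermMatrix α * A * (qubitPermMatrix α)⁻¹ = A} =
      (specialUnitaryGroup (I → Fin 2) ℂ : Set (Matrix (I → Fin 2) (I → Fin 2) ℂ)) ∩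
        (qubitPermMatrix '' S).centralizer := by
  ext A
  simp only [conj_eq_self_iff_commute (isUnit_det_qubitPermMatrix _), commute_iff_eq,
    Set.mem_ofPred_eq, Set.mem_inter_iff, SetLike.mem_coe, mem_specialUnitaryGroup_iff,
    mem_unitaryGroup_iff, star_eq_conjTranspose, Set.mem_centralizer_iff, Set.forall_mem_image,
    and_assoc]

end Qubit

/-- For `N ≥ 1` and a subgroup `G` of the permutation group of `Fin N`, the set
`{A ∈ SU(2^N) : U_α A U_α⁻¹ = A for all α ∈ G}` is path-connected. -/
theorem GSU_isPathConnected (N : ℕ) (hN : 1 ≤ N) (G : Subgroup (Equiv.Perm (Fin N))) :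
    IsPathConnected {A : Matrix (Fin N → Fin 2) (Fin N → Fin 2) ℂ |
        A * Aᴴ = 1 ∧ A.det = 1 ∧
        ∀ α ∈ G, qubitPermMatrix α * A * (qubitPermMatrix α)⁻¹ = A} := by
  simpa only [← setOf_qubitPermMatrix_conj_eq, SetLike.mem_coe] using
    GSU_isPathConnected_general (v := Pi.single 0 1) (by simp)
      (vecMulVec_single_zero_mem_centralizer (G : Set (Equiv.Perm (Fin N))))
end

section
/- Let N ≥ 1. For μ : Fin N → Fin 4, let P_μ be the Pauli string, i.e. the matrix indexed by (Fin N → Fin 2) with entries (P_μ)_{x,y} = ∏_{j : Fin N} (σ_{μ(j)})_{x(j), y(j)}, where σ₀, σ₁, σ₂, σ₃ are the Pauli matrices. Then the 4^N matrices {i·P_μ : μ : Fin N → Fin 4} form a basis of the real vector space of skew-Hermitian 2^N × 2^N complex matrices, and the 4^N − 1 matrices {i·P_μ : μ not identically 0} form a basis of the real vector space su(2^N) of traceless skew-Hermitian 2^N × 2^N complex matrices. -/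
open Matrix

/-- The four Pauli matrices `σ₀, σ₁, σ₂, σ₃`. -/
def pauli : Fin 4 → Matrix (Fin 2) (Fin 2) ℂ :=
  ![!![1, 0; 0, 1], !![0, 1; 1, 0], !![0, -Complex.I; Complex.I, 0], !![1, 0; 0, -1]]

/-- The Pauli string associated to `μ : Fin N → Fin 4`: the matrix indexed by
`Fin N → Fin 2` with entries `(P_μ)_{x,y} = ∏ j, (σ_{μ j})_{x j, y j}`. -/
def pauliString {N : ℕ} (μ : Fin N → Fin 4) :
    Matrix (Fin N → Fin 2) (Fin N → Fin 2) ℂ :=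
  Matrix.of fun x y => ∏ j, pauli (μ j) (x j) (y j)

/-!
By multiplicativity of the trace under tensor products, the Pauli strings are orthogonal for the
trace form, hence so are the `4 ^ N` matrices `i • P_μ`, which therefore form a complex basis of the
`2 ^ N × 2 ^ N` matrices. As these basis vectors are skew-Hermitian, `star` acts on coordinates by
`c ↦ -conj c`, so a matrix is skew-Hermitian exactly when its coordinates are real. Finally, all
`P_μ` except the identity string `P_0` are traceless, so discarding `i • P_0` cuts the real span
down to its traceless part.
-/

open Module

section PiKronecker

variable {ι R : Type*} {l m n : ι → Type*} [Fintype ι] [CommSemiring R]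

/-- The Kronecker product of a finite family of matrices, indexed by families of indices: the matrix
of the tensor product of the corresponding linear maps. -/
def piKronecker (A : ∀ i, Matrix (m i) (n i) R) : Matrix (∀ i, m i) (∀ i, n i) R :=
  Matrix.of fun x y => ∏ i, A i (x i) (y i)

lemma piKronecker_mul_piKronecker [DecidableEq ι] [∀ i, Fintype (m i)]
    (A : ∀ i, Matrix (l i) (m i) R) (B : ∀ i, Matrix (m i) (n i) R) :
    piKronecker A * piKronecker B = piKronecker fun i => A i * B i := by
  ext x y
  simp only [piKronecker, mul_apply, of_apply, ← Finset.prod_mul_distrib, Fintype.prod_sum]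

lemma trace_piKronecker [DecidableEq ι] [∀ i, Fintype (m i)] (A : ∀ i, Matrix (m i) (m i) R) :
    (piKronecker A).trace = ∏ i, (A i).trace := by
  simp only [piKronecker, trace, diag_apply, of_apply, Fintype.prod_sum]

lemma conjTranspose_piKronecker [StarRing R] (A : ∀ i, Matrix (m i) (n i) R) :
    (piKronecker A)ᴴ = piKronecker fun i => (A i)ᴴ := by
  ext x y
  simp only [piKronecker, conjTranspose_apply, of_apply, star_prod]

end PiKronecker

section SkewAdjoint

variable {κ R 𝕜 E : Type*} [AddCommGroup E] [StarAddMonoid E]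

lemma repr_star_of_forall_mem_skewAdjoint [CommRing R] [StarRing R] [Module R E] [StarModule R E]
    (b : Basis κ R E) (hb : ∀ i, b i ∈ skewAdjoint E) (a : E) (i : κ) :
    b.repr (star a) i = -star (b.repr a i) := by
  classical
  suffices b.coord i ∘ₛₗ (starLinearEquiv R : E ≃ₗ⋆[R] E).toLinearMap =
      -((starLinearEquiv R : R ≃ₗ⋆[R] R).toLinearMap ∘ₛₗ b.coord i) from
    LinearMap.congr_fun this a
  refine b.ext fun j => ?_
  simp [skewAdjoint.mem_iff.mp (hb j), Finsupp.single_apply, apply_ite star]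

variable [RCLike 𝕜] [Module 𝕜 E] [StarModule 𝕜 E] [Module ℝ E] [StarModule ℝ E]
  [IsScalarTower ℝ 𝕜 E]

lemma span_real_range_eq_skewAdjoint (b : Basis κ 𝕜 E) (hb : ∀ i, b i ∈ skewAdjoint E) :
    Submodule.span ℝ (Set.range b) = skewAdjoint.submodule ℝ E := by
  ext a
  calc a ∈ Submodule.span ℝ (Set.range b)
      ↔ ∀ i, b.repr a i ∈ Set.range (algebraMap ℝ 𝕜) := b.mem_span_iff_repr_mem ℝ a
    _ ↔ ∀ i, star (b.repr a i) = b.repr a i := by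
      simp only [Set.mem_range, RCLike.algebraMap_eq_ofReal, RCLike.star_def,
        RCLike.conj_eq_iff_real, @eq_comm _ (b.repr a _)]
    _ ↔ star a = -a := by
      simp [b.ext_elem_iff, repr_star_of_forall_mem_skewAdjoint b hb]

end SkewAdjoint

lemma span_range_ne_eq_inf_ker {κ R M N : Type*} [Ring R] [IsDomain R] [AddCommGroup M]
    [AddCommGroup N] [Module R M] [Module R N] [IsTorsionFree R N] (v : κ → M) (f : M →ₗ[R] N)
    {k : κ} (hk : f (v k) ≠ 0) (hf : ∀ i, i ≠ k → f (v i) = 0) :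
    Submodule.span R (Set.range fun i : {i // i ≠ k} => v i) =
      Submodule.span R (Set.range v) ⊓ LinearMap.ker f := by
  have hle : Submodule.span R (Set.range fun i : {i // i ≠ k} => v i) ≤ LinearMap.ker f :=
    Submodule.span_le.mpr <| Set.range_subset_iff.mpr fun i => hf i i.2
  refine le_antisymm (le_inf (Submodule.span_mono (Set.range_comp_subset_range _ v)) hle) ?_
  rintro x ⟨hx, hfx⟩
  have hrange : Set.range v = insert (v k) (Set.range fun i : {i // i ≠ k} => v i) := by
    rw [← Set.insert_image_compl_eq_range v k, Set.image_eq_range]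
    rfl
  obtain ⟨c, z, hz, rfl⟩ := Submodule.mem_span_insert.mp (hrange ▸ hx)
  have hc : c • f (v k) = 0 := by
    simpa [LinearMap.mem_ker.mp (hle hz)] using hfx
  simpa [(smul_eq_zero.mp hc).resolve_right hk] using hz

lemma linearIndependent_of_trace_mul {κ n K : Type*} [Field K] [Fintype n] {v : κ → Matrix n n K}
    (hne : Pairwise fun i j => (v i * v j).trace = 0) (hself : ∀ i, (v i * v i).trace ≠ 0) :
    LinearIndependent K v := by
  classical
  exact LinearMap.BilinForm.linearIndependent_of_iIsOrtho
    (B := (LinearMap.mul K (Matrix n n K)).compr₂ (traceLinearMap n K K))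
    hne hself

lemma trace_pauli (a : Fin 4) : (pauli a).trace = if a = 0 then 2 else 0 := by
  fin_cases a <;> norm_num [pauli, trace_fin_two]

lemma trace_pauli_mul_pauli (a b : Fin 4) :
    (pauli a * pauli b).trace = if a = b then 2 else 0 := by
  fin_cases a <;> fin_cases b <;> norm_num [pauli, trace_fin_two]

lemma isHermitian_pauli (a : Fin 4) : (pauli a).IsHermitian := by
  ext x y
  fin_cases a <;> fin_cases x <;> fin_cases y <;> simp [pauli]

section PauliString

variable {N : ℕ} (μ ν : Fin N → Fin 4)

lemma pauliString_eq_piKronecker : pauliString μ = piKronecker fun j => pauli (μ j) := rfl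

lemma isHermitian_pauliString : (pauliString μ).IsHermitian := by
  simp only [IsHermitian, pauliString_eq_piKronecker, conjTranspose_piKronecker,
    (isHermitian_pauli _).eq]

lemma trace_pauliString : (pauliString μ).trace = if μ = fun _ => 0 then 2 ^ N else 0 := by
  simp [pauliString_eq_piKronecker, trace_piKronecker, trace_pauli, Finset.prod_ite_zero,
    funext_iff]

lemma trace_pauliString_mul_pauliString :
    (pauliString μ * pauliString ν).trace = if μ = ν then 2 ^ N else 0 := by
  simp [pauliString_eq_piKronecker, piKronecker_mul_piKronecker, trace_piKronecker,
    trace_pauli_mul_pauli, Finset.prod_ite_zero, funext_iff]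

lemma I_smul_pauliString_mem_skewAdjoint :
    Complex.I • pauliString μ ∈ skewAdjoint (Matrix (Fin N → Fin 2) (Fin N → Fin 2) ℂ) := by
  simp [skewAdjoint.mem_iff, star_eq_conjTranspose, (isHermitian_pauliString μ).eq]

variable (N) in
lemma linearIndependent_I_smul_pauliString :
    LinearIndependent ℂ fun μ : Fin N → Fin 4 => Complex.I • pauliString μ :=
  linearIndependent_of_trace_mul
    (fun μ ν hne => by simp [trace_pauliString_mul_pauliString, hne])
    (fun μ => by simp [trace_pauliString_mul_pauliString])

variable (N) in
lemma span_I_smul_pauliString_eq_skewAdjoint :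
    Submodule.span ℝ (Set.range fun μ : Fin N → Fin 4 => Complex.I • pauliString μ) =
      skewAdjoint.submodule ℝ (Matrix (Fin N → Fin 2) (Fin N → Fin 2) ℂ) := by
  have hcard : Fintype.card (Fin N → Fin 4) =
      finrank ℂ (Matrix (Fin N → Fin 2) (Fin N → Fin 2) ℂ) := by
    simp [finrank_matrix, ← mul_pow]
  let b := basisOfLinearIndependentOfCardEqFinrank (linearIndependent_I_smul_pauliString N) hcard
  have hb : ⇑b = fun μ => Complex.I • pauliString μ :=
    coe_basisOfLinearIndependentOfCardEqFinrank _ _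
  rw [← hb]
  refine span_real_range_eq_skewAdjoint b fun μ => ?_
  simpa only [hb] using I_smul_pauliString_mem_skewAdjoint μ

end PauliString

/-- For `N ≥ 1`, the `4^N` matrices `i·P_μ` (for `μ : Fin N → Fin 4`) form an
`ℝ`-basis of the real vector space of skew-Hermitian `2^N × 2^N` matrices, and the `4^N − 1`
matrices `i·P_μ` with `μ` not identically `0` form an `ℝ`-basis of the real vector space
`su(2^N)` of traceless skew-Hermitian matrices. -/
theorem pauliStrings_basis (N : ℕ) (hN : 1 ≤ N) :
    (LinearIndependent ℝ fun μ : Fin N → Fin 4 => Complex.I • pauliString μ) ∧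
    ((Submodule.span ℝ
        (Set.range fun μ : Fin N → Fin 4 => Complex.I • pauliString μ) : Set _) =
      {a : Matrix (Fin N → Fin 2) (Fin N → Fin 2) ℂ | aᴴ = -a}) ∧
    (LinearIndependent ℝ
      fun μ : {μ : Fin N → Fin 4 // μ ≠ fun _ => 0} => Complex.I • pauliString μ.1) ∧
    ((Submodule.span ℝ
        (Set.range fun μ : {μ : Fin N → Fin 4 // μ ≠ fun _ => 0} =>
          Complex.I • pauliString μ.1) : Set _) =
      {a : Matrix (Fin N → Fin 2) (Fin N → Fin 2) ℂ | aᴴ = -a ∧ a.trace = 0}) := by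
  have hli := (linearIndependent_I_smul_pauliString N).restrict_scalars' ℝ
  have hspan := span_I_smul_pauliString_eq_skewAdjoint N
  refine ⟨hli, by rw [hspan]; rfl, hli.comp _ Subtype.val_injective, ?_⟩
  have hspan_ne := span_range_ne_eq_inf_ker (fun μ => Complex.I • pauliString μ)
    (traceLinearMap (Fin N → Fin 2) ℝ ℂ) (k := fun _ => 0)
    (by simp [trace_pauliString])
    (fun μ hμ => by simp [trace_pauliString, hμ])
  rw [hspan_ne, hspan]
  rfl
end

section
/- Let N ≥ 1 and let H^{(N)} be the diagonal matrix indexed by (Fin N → Fin 2) whose diagonal entry at x equals the number of indices i with x(i) = 1 (the Hamming weight of x). Then the real dimension of the real vector space of 2^N × 2^N complex matrices a that are skew-Hermitian, traceless, and commute with H^{(N)} equals the central binomial coefficient C(2N, N) − 1. -/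
open Matrix

/-- The Hamming-weight Hamiltonian `H^{(N)}`: the diagonal matrix indexed by
`Fin N → Fin 2` whose diagonal entry at `x` is the number of indices `i` with `x i = 1`. -/
def hammingHamiltonian (N : ℕ) : Matrix (Fin N → Fin 2) (Fin N → Fin 2) ℂ :=
  Matrix.diagonal fun x => ((Finset.univ.filter fun i => x i = 1).card : ℂ)

/-!
A matrix commutes with `diagonal E` exactly when it is supported on the pairs `(x, y)` with
`E x = E y`, so the commutant has complex dimension the number of such pairs, and the traceless
matrices form a hyperplane in it. This hyperplane is stable under the adjoint, hence is the
complexification of its skew-Hermitian part, whose real dimension is therefore the same. For the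
Hamming weight the number of pairs is `∑ k, C(N, k) ^ 2 = C(2N, N)`.
-/

section StarModule

variable {A : Type*} [AddCommGroup A] [Module ℂ A] [StarAddMonoid A] [StarModule ℂ A]

/-- The real space of skew-adjoint elements of a complex subspace. -/
noncomputable def skewAdjointsIn (W : Submodule ℂ A) : Submodule ℝ A :=
  W.restrictScalars ℝ ⊓ skewAdjoint.submodule ℝ A

theorem mem_skewAdjointsIn {W : Submodule ℂ A} {a : A} :
    a ∈ skewAdjointsIn W ↔ a ∈ W ∧ star a = -a :=
  Iff.rfl

theorem skewAdjointPart_mem_skewAdjointsIn {W : Submodule ℂ A} (hW : ∀ a ∈ W, star a ∈ W) {a : A}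
    (ha : a ∈ W) : (skewAdjointPart ℝ a : A) ∈ skewAdjointsIn W := by
  refine ⟨?_, (skewAdjointPart ℝ a).2⟩
  rw [skewAdjointPart_apply_coe]
  exact (W.restrictScalars ℝ).smul_mem _ (W.sub_mem ha (hW a ha))

theorem skewAdjointPart_add_I_smul {a b : A} (ha : a ∈ skewAdjoint A) (hb : b ∈ skewAdjoint A) :
    (skewAdjointPart ℝ (a + Complex.I • b) : A) = a := by
  have hIb : IsSelfAdjoint (Complex.I • b) := Complex.isSelfAdjoint_I_smul_iff_mem_skewAdjoint.2 hb
  have hpart : skewAdjointPart ℝ a = ⟨a, ha⟩ :=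
    LinearMap.congr_fun (skewAdjointPart_comp_subtype_skewAdjoint ℝ) ⟨a, ha⟩
  rw [map_add, hIb.skewAdjointPart_apply ℝ, add_zero, hpart]

theorem I_smul_skewAdjointPart_neg_I_smul (a : A) :
    Complex.I • (skewAdjointPart ℝ (-Complex.I • a) : A) = selfAdjointPart ℝ a := by
  simp only [skewAdjointPart_apply_coe, selfAdjointPart_apply_coe, star_smul, star_neg,
    Complex.star_def, Complex.conj_I, neg_neg, smul_comm Complex.I (⅟2 : ℝ), smul_sub, smul_smul,
    smul_neg, Complex.I_mul_I, one_smul, neg_smul, sub_neg_eq_add, smul_add]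

/-- A `*`-stable complex subspace `W` as the complexification of its skew-adjoint part:
the pair `(a, b)` corresponds to `a + I • b`. -/
noncomputable def skewAdjointsInProdEquiv (W : Submodule ℂ A) (hW : ∀ a ∈ W, star a ∈ W) :
    (skewAdjointsIn W × skewAdjointsIn W) ≃ₗ[ℝ] W where
  toFun p := ⟨p.1 + Complex.I • (p.2 : A), W.add_mem p.1.2.1 (W.smul_mem _ p.2.2.1)⟩
  invFun w :=
    (⟨_, skewAdjointPart_mem_skewAdjointsIn hW w.2⟩,
      ⟨_, skewAdjointPart_mem_skewAdjointsIn hW (W.smul_mem (-Complex.I) w.2)⟩)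
  map_add' p q := by
    ext
    simp only [Prod.fst_add, Prod.snd_add, Submodule.coe_add]
    module
  map_smul' c p := by
    ext
    change c • (p.1 : A) + Complex.I • c • (p.2 : A) = c • (p.1 + Complex.I • (p.2 : A))
    rw [smul_add, smul_comm c]
  left_inv := by
    rintro ⟨⟨a, ha⟩, ⟨b, hb⟩⟩
    have hrot : -Complex.I • (a + Complex.I • b) = b + Complex.I • -a := by
      rw [smul_add, smul_smul, neg_mul, Complex.I_mul_I, neg_neg, one_smul, neg_smul, smul_neg,
        add_comm]
    ext
    · exact skewAdjointPart_add_I_smul ha.2 hb.2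
    · change (skewAdjointPart ℝ (-Complex.I • (a + Complex.I • b)) : A) = b
      rw [hrot, skewAdjointPart_add_I_smul hb.2 (neg_mem ha.2)]
  right_inv w := by
    ext
    simp only [I_smul_skewAdjointPart_neg_I_smul]
    rw [add_comm, StarModule.selfAdjointPart_add_skewAdjointPart]

theorem finrank_skewAdjointsIn (W : Submodule ℂ A) [FiniteDimensional ℂ W]
    (hW : ∀ a ∈ W, star a ∈ W) :
    Module.finrank ℝ (skewAdjointsIn W) = Module.finrank ℂ W := by
  have : FiniteDimensional ℝ (W.restrictScalars ℝ) := .complexToReal W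
  have : FiniteDimensional ℝ (skewAdjointsIn W) := Submodule.finiteDimensional_of_le inf_le_left
  have h := (skewAdjointsInProdEquiv W hW).finrank_eq
  rw [Module.finrank_prod, finrank_real_of_complex] at h
  lia

end StarModule

theorem finrank_inf_ker_add_one {K M : Type*} [Field K] [AddCommGroup M] [Module K M]
    (W : Submodule K M) [FiniteDimensional K W] (f : Module.Dual K M) {w : M} (hw : w ∈ W)
    (hf : f w ≠ 0) :
    Module.finrank K (W ⊓ LinearMap.ker f : Submodule K M) + 1 = Module.finrank K W := by
  have hne : f.domRestrict W ≠ 0 := fun h => hf (LinearMap.congr_fun h ⟨w, hw⟩)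
  rw [← Module.Dual.finrank_ker_add_one_of_ne_zero hne, LinearMap.ker_domRestrict,
    ← Submodule.map_comap_subtype, Submodule.finrank_map_subtype_eq]

section DiagonalCommutant

variable {n R : Type*} [Fintype n] [DecidableEq n] [CommRing R] [IsDomain R]

theorem mem_centralizer_diagonal_iff {E : n → R} {a : Matrix n n R} :
    a ∈ Subalgebra.centralizer R {diagonal E} ↔ ∀ x y, E x ≠ E y → a x y = 0 := by
  rw [Subalgebra.mem_centralizer_iff]
  simp only [Set.mem_singleton_iff, forall_eq]
  simp only [← Matrix.ext_iff, mul_diagonal, diagonal_mul, mul_comm (a _ _), mul_eq_mul_right_iff,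
    or_iff_not_imp_left, ne_eq]

theorem star_mem_centralizer_diagonal [StarRing R] {E : n → R} {a : Matrix n n R}
    (ha : a ∈ Subalgebra.centralizer R {diagonal E}) :
    star a ∈ Subalgebra.centralizer R {diagonal E} :=
  mem_centralizer_diagonal_iff.2 fun x y hxy => by
    rw [star_apply, mem_centralizer_diagonal_iff.1 ha y x hxy.symm, star_zero]

/-- A matrix commuting with `diagonal E` is given by its entries at the pairs `(x, y)` with
`E x = E y`, which are arbitrary. -/
def centralizerDiagonalEquiv [DecidableEq R] (E : n → R) :
    Subalgebra.centralizer R {diagonal E} ≃ₗ[R] (E.PullbackSelf → R) where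
  toFun a p := a.1 p.fst p.snd
  invFun f := ⟨of fun x y => if h : E x = E y then f ⟨(x, y), h⟩ else 0,
    mem_centralizer_diagonal_iff.2 fun _ _ h => dif_neg h⟩
  map_add' _ _ := rfl
  map_smul' _ _ := rfl
  left_inv a := by
    ext x y
    by_cases h : E x = E y
    · exact dif_pos h
    · exact (dif_neg h).trans (mem_centralizer_diagonal_iff.1 a.2 x y h).symm
  right_inv f := funext fun p => dif_pos p.2

theorem finrank_centralizer_diagonal (E : n → R) :
    Module.finrank R (Subalgebra.centralizer R {diagonal E}) = Nat.card E.PullbackSelf := by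
  classical
  rw [(centralizerDiagonalEquiv E).finrank_eq, Module.finrank_fintype_fun_eq_card,
    Nat.card_eq_fintype_card]

end DiagonalCommutant

theorem card_pullbackSelf_eq_sum_sq {α β : Type*} [Fintype α] [DecidableEq β] (f : α → β)
    (t : Finset β) (hf : ∀ a, f a ∈ t) :
    Nat.card f.PullbackSelf = ∑ b ∈ t, (Finset.univ.filter fun a => f a = b).card ^ 2 := by
  classical
  rw [Nat.card_eq_fintype_card, Fintype.card_subtype,
    Finset.card_eq_sum_card_fiberwise (f := fun p => f p.1) fun p _ => hf p.1]
  refine Finset.sum_congr rfl fun b _ => ?_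
  rw [sq, ← Finset.card_product]
  congr 1
  ext p
  simp only [Finset.mem_filter, Finset.mem_univ, Finset.mem_product, true_and]
  grind

theorem card_pullbackSelf_comp {α β γ : Type*} {g : β → γ} (hg : Function.Injective g)
    (f : α → β) : Nat.card (g ∘ f).PullbackSelf = Nat.card f.PullbackSelf :=
  Nat.card_congr (Equiv.subtypeEquivRight fun _ => hg.eq_iff)

section HammingWeight

variable {ι : Type*} [Fintype ι]

/-- The Hamming weight of a binary word; unlike `hammingNorm` it is phrased as in
`hammingHamiltonian`. -/
def hammingWeight (x : ι → Fin 2) : ℕ :=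
  (Finset.univ.filter fun i => x i = 1).card

theorem card_filter_hammingWeight_eq [DecidableEq ι] (k : ℕ) :
    (Finset.univ.filter fun x : ι → Fin 2 => hammingWeight x = k).card =
      (Fintype.card ι).choose k := by
  rw [← Finset.card_univ, ← Finset.card_powersetCard]
  refine Finset.card_bij' (fun x _ => Finset.univ.filter fun i => x i = 1)
    (fun s _ i => if i ∈ s then 1 else 0) ?_ ?_ ?_ ?_
  · intro x hx
    exact Finset.mem_powersetCard.2 ⟨Finset.subset_univ _, (Finset.mem_filter.1 hx).2⟩
  · intro s hs
    exact Finset.mem_filter.2 ⟨Finset.mem_univ _, by simpa [hammingWeight] using hs⟩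
  · intro x _
    ext i
    grind
  · simp

theorem card_pullbackSelf_hammingWeight :
    Nat.card (hammingWeight (ι := ι)).PullbackSelf =
      (2 * Fintype.card ι).choose (Fintype.card ι) := by
  classical
  have hweight (x : ι → Fin 2) : hammingWeight x ∈ Finset.range (Fintype.card ι + 1) :=
    Finset.mem_range_succ_iff.2 (Finset.card_le_univ _)
  simp only [card_pullbackSelf_eq_sum_sq _ _ hweight, card_filter_hammingWeight_eq,
    Nat.sum_range_choose_sq]

end HammingWeight

theorem finrank_energy_preserving_general {n : Type*} [Fintype n] [DecidableEq n] [Nonempty n]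
    (E : n → ℂ) (V : Submodule ℝ (Matrix n n ℂ))
    (hV : ∀ a, a ∈ V ↔ aᴴ = -a ∧ a.trace = 0 ∧ a * diagonal E = diagonal E * a) :
    Module.finrank ℝ V = Nat.card E.PullbackSelf - 1 := by
  set C := Subalgebra.toSubmodule (Subalgebra.centralizer ℂ {diagonal E})
  set W : Submodule ℂ (Matrix n n ℂ) := C ⊓ LinearMap.ker (traceLinearMap n ℂ ℂ)
  have hVW : V = skewAdjointsIn W := by
    ext a
    simp only [hV, mem_skewAdjointsIn, W, C, Submodule.mem_inf, Subalgebra.mem_toSubmodule,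
      Subalgebra.mem_centralizer_iff, Set.mem_singleton_iff, forall_eq, LinearMap.mem_ker,
      traceLinearMap_apply, star_eq_conjTranspose]
    tauto
  have hstar : ∀ a ∈ W, star a ∈ W := by
    rintro a ⟨hC, htr⟩
    exact ⟨star_mem_centralizer_diagonal hC, (trace_conjTranspose a).trans (by simpa using htr)⟩
  obtain ⟨x⟩ := ‹Nonempty n›
  have hsingle : single x x 1 ∈ C := mem_centralizer_diagonal_iff.2 fun i j hij => by
    apply single_apply_of_ne
    grind
  have hker := finrank_inf_ker_add_one C (traceLinearMap n ℂ ℂ) hsingle (by simp)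
  rw [hVW, finrank_skewAdjointsIn W hstar, ← finrank_centralizer_diagonal]
  exact Nat.eq_sub_of_add_eq hker

/-- For `N ≥ 1`, the real dimension of the real vector space of
skew-Hermitian, traceless `2^N × 2^N` matrices commuting with `H^{(N)}` equals the central
binomial coefficient `C(2N, N) − 1`. -/
theorem finrank_energy_preserving (N : ℕ) (hN : 1 ≤ N)
    (V : Submodule ℝ (Matrix (Fin N → Fin 2) (Fin N → Fin 2) ℂ))
    (hV : ∀ a, a ∈ V ↔ aᴴ = -a ∧ a.trace = 0 ∧
      a * hammingHamiltonian N = hammingHamiltonian N * a) :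
    Module.finrank ℝ V = Nat.choose (2 * N) N - 1 := by
  rw [finrank_energy_preserving_general (Nat.cast ∘ hammingWeight) V hV,
    card_pullbackSelf_comp Nat.cast_injective, card_pullbackSelf_hammingWeight, Fintype.card_fin]
end

section
/- Let n ≥ 1 and let A ∈ SU(n) be unitarily diagonalized as A = P·D·Pᴴ with P unitary and D = diag(e^{iθ_1},…,e^{iθ_n}) with all θ_j ∈ [0, 2π). Suppose θ_1 + … + θ_n = 2πk for some k ∈ {0, 1, …, n−1}. Then there is a continuous path γ : [0,1] → SU(n) with γ(0) = e^{2πik/n}·1 (the scalar matrix) and γ(1) = A; explicitly, γ(t) = P · diag(e^{i(tθ_1 + (1−t)·2πk/n)}, …, e^{i(tθ_n + (1−t)·2πk/n)}) · Pᴴ lies in SU(n) for all t ∈ [0,1]. -/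
open Matrix

/-!
The path moves the vector of phases linearly from the constant vector at the mean of the `θ j` to
`θ`, and both have the same sum `2πk`. The sum is affine, so it stays equal to `2πk` along the
segment; it determines the determinant `e^{i · 2πk} = 1`, while unitarity holds for any real
phases. At `t = 0` the diagonal factor is scalar, so conjugation by `P` fixes it.
-/

section MatricesOverStarRings

variable {ι R : Type*} [Fintype ι] [DecidableEq ι] [CommRing R] [StarRing R]

theorem diagonal_mem_unitaryGroup_iff {d : ι → R} :
    diagonal d ∈ unitaryGroup ι R ↔ ∀ i, d i ∈ unitary R := by
  simp only [mem_unitaryGroup_iff, star_eq_conjTranspose, diagonal_conjTranspose,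
    diagonal_mul_diagonal, ← diagonal_one, diagonal_eq_diagonal_iff, Pi.star_apply,
    Unitary.mem_iff_self_mul_star]

theorem det_mul_mul_conjTranspose_of_mem_unitaryGroup {P : Matrix ι ι R}
    (hP : P ∈ unitaryGroup ι R) (M : Matrix ι ι R) : (P * M * Pᴴ).det = M.det :=
  det_conj_of_mul_eq_one (mem_unitaryGroup_iff.mp hP) (mem_unitaryGroup_iff'.mp hP)

end MatricesOverStarRings

theorem sum_lineMap {ι R M : Type*} [Ring R] [AddCommGroup M] [Module R M]
    (s : Finset ι) (f g : ι → M) (t : R) :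
    ∑ i ∈ s, AffineMap.lineMap (f i) (g i) t =
      AffineMap.lineMap (∑ i ∈ s, f i) (∑ i ∈ s, g i) t := by
  simp only [AffineMap.lineMap_apply_module, Finset.sum_add_distrib, Finset.smul_sum]

theorem exp_I_mul_ofReal_mem_unitary (x : ℝ) : Complex.exp (Complex.I * x) ∈ unitary ℂ := by
  rw [Unitary.mem_iff_self_mul_star, Complex.star_def, Complex.mul_conj']
  simp [Complex.norm_exp_I_mul_ofReal]

section ConjPhases

variable {ι : Type*} [Fintype ι] [DecidableEq ι]

/-- The matrix `P · diag(e^{i φ_j}) · Pᴴ` with phases `φ`, a unitary diagonalization when `P` is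
unitary. Bundling it as a function of the real vector `φ` turns a path of phases into a path of
matrices. -/
noncomputable def conjPhases (P : Matrix ι ι ℂ) (φ : ι → ℝ) : Matrix ι ι ℂ :=
  P * diagonal (fun j => Complex.exp (Complex.I * φ j)) * Pᴴ

theorem continuous_conjPhases (P : Matrix ι ι ℂ) : Continuous (conjPhases P) := by
  unfold conjPhases
  fun_prop

variable {P : Matrix ι ι ℂ}

theorem conjPhases_const (hP : P ∈ unitaryGroup ι ℂ) (c : ℝ) :
    conjPhases P (fun _ => c) = Complex.exp (Complex.I * c) • 1 := by
  have hPP : P * Pᴴ = 1 := mem_unitaryGroup_iff.mp hP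
  rw [conjPhases, ← smul_one_eq_diagonal, Matrix.mul_smul, mul_one, smul_mul, hPP]

theorem conjPhases_mem_unitaryGroup (hP : P ∈ unitaryGroup ι ℂ) (φ : ι → ℝ) :
    conjPhases P φ ∈ unitaryGroup ι ℂ :=
  mul_mem (mul_mem hP (diagonal_mem_unitaryGroup_iff.mpr fun j =>
    exp_I_mul_ofReal_mem_unitary (φ j))) (Unitary.star_mem hP)

theorem det_conjPhases (hP : P ∈ unitaryGroup ι ℂ) (φ : ι → ℝ) :
    (conjPhases P φ).det = Complex.exp (Complex.I * (∑ j, φ j : ℝ)) := by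
  rw [conjPhases, det_mul_mul_conjTranspose_of_mem_unitaryGroup hP, det_diagonal,
    ← Complex.exp_sum, ← Finset.mul_sum, Complex.ofReal_sum]

theorem conjPhases_mem_specialUnitaryGroup (hP : P ∈ unitaryGroup ι ℂ) {φ : ι → ℝ} {k : ℤ}
    (hφ : ∑ j, φ j = 2 * Real.pi * k) : conjPhases P φ ∈ specialUnitaryGroup ι ℂ := by
  refine mem_specialUnitaryGroup_iff.mpr ⟨conjPhases_mem_unitaryGroup hP φ, ?_⟩
  rw [det_conjPhases hP, hφ, Complex.exp_eq_one_iff]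
  exact ⟨k, by push_cast; ring⟩

theorem path_to_center_general [Nonempty ι] {A : Matrix ι ι ℂ} {θ : ι → ℝ} {k : ℤ}
    (hP : P ∈ unitaryGroup ι ℂ)
    (hA : A = P * diagonal (fun j => Complex.exp (Complex.I * θ j)) * Pᴴ)
    (hsum : ∑ j, θ j = 2 * Real.pi * k)
    {γ : ℝ → Matrix ι ι ℂ}
    (hγ : ∀ t : ℝ, γ t = P * diagonal (fun j => Complex.exp
      (Complex.I * (t * θ j + (1 - t) * (2 * Real.pi * k / Fintype.card ι)))) * Pᴴ) :
    Continuous γ ∧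
    γ 0 = Complex.exp (Complex.I * (2 * Real.pi * k / Fintype.card ι)) • (1 : Matrix ι ι ℂ) ∧
    γ 1 = A ∧
    ∀ t, γ t ∈ specialUnitaryGroup ι ℂ := by
  let mean : ℝ := 2 * Real.pi * k / Fintype.card ι
  let φ (t : ℝ) (j : ι) : ℝ := AffineMap.lineMap mean (θ j) t
  have hγφ : γ = fun t => conjPhases P (φ t) := by
    funext t
    simp [hγ, conjPhases, φ, mean, AffineMap.lineMap_apply_ring, add_comm]
  have hmean : ∑ _j : ι, mean = 2 * Real.pi * k := by
    simp [mean, mul_div_cancel₀]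
  have hφ (t : ℝ) : ∑ j, φ t j = 2 * Real.pi * k := by
    rw [sum_lineMap, hmean, hsum, AffineMap.lineMap_same_apply]
  have hφ_cont : Continuous φ := continuous_pi fun j => AffineMap.lineMap_continuous
  subst hγφ
  refine ⟨(continuous_conjPhases P).comp hφ_cont, ?_, ?_, fun t =>
    conjPhases_mem_specialUnitaryGroup hP (hφ t)⟩
  · simpa [φ, mean] using conjPhases_const hP mean
  · simp [φ, conjPhases, hA]

end ConjPhases

/-- Let `A ∈ SU(n)` be unitarily diagonalized as `A = P D Pᴴ` with
`D = diag(e^{iθ_1},…,e^{iθ_n})`, all `θ_j ∈ [0, 2π)`, and `Σ θ_j = 2πk` for some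
`0 ≤ k < n`.  Then `γ(t) = P · diag(e^{i(tθ_j + (1−t)·2πk/n)})_j · Pᴴ` is a continuous path
in `SU(n)` from the scalar matrix `e^{2πik/n}·1` to `A`. -/
theorem path_to_center (n : ℕ) (hn : 1 ≤ n) (A P : Matrix (Fin n) (Fin n) ℂ)
    (θ : Fin n → ℝ) (k : ℕ) (hk : k < n)
    (hSU : A * Aᴴ = 1 ∧ A.det = 1)
    (hP : P * Pᴴ = 1)
    (hθ : ∀ j, θ j ∈ Set.Ico (0 : ℝ) (2 * Real.pi))
    (hA : A = P * Matrix.diagonal (fun j => Complex.exp (Complex.I * θ j)) * Pᴴ)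
    (hsum : ∑ j, θ j = 2 * Real.pi * k)
    (γ : ℝ → Matrix (Fin n) (Fin n) ℂ)
    (hγ : ∀ t : ℝ, γ t = P * Matrix.diagonal (fun j =>
      Complex.exp (Complex.I * (t * θ j + (1 - t) * (2 * Real.pi * k / n)))) * Pᴴ) :
    ContinuousOn γ (Set.Icc 0 1) ∧
    γ 0 = Complex.exp (Complex.I * (2 * Real.pi * k / n)) • (1 : Matrix (Fin n) (Fin n) ℂ) ∧
    γ 1 = A ∧
    ∀ t ∈ Set.Icc (0 : ℝ) 1, γ t * (γ t)ᴴ = 1 ∧ (γ t).det = 1 := by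
  have : NeZero n := ⟨Nat.one_le_iff_ne_zero.mp hn⟩
  obtain ⟨hcont, h0, h1, hSUγ⟩ := path_to_center_general (k := k)
    (mem_unitaryGroup_iff.mpr hP) hA (mod_cast hsum) (γ := γ) (by simpa using hγ)
  exact ⟨hcont.continuousOn, by simpa using h0, h1, fun t _ =>
    (mem_specialUnitaryGroup_iff.mp (hSUγ t)).imp_left mem_unitaryGroup_iff.mp⟩
end

section
/- Let n ≥ 1, let M be any set of n × n complex matrices, and let A ∈ SU(n) commute with every element of M. Suppose A is unitarily diagonalized as A = P·D·Pᴴ with P unitary and D = diag(e^{iθ_1},…,e^{iθ_n}), all θ_j ∈ [0, 2π), and θ_1 + … + θ_n = 2πk for some k ∈ {0, 1, …, n−1}. Then the path γ(t) = P · diag(e^{i(tθ_1 + (1−t)·2πk/n)}, …, e^{i(tθ_n + (1−t)·2πk/n)}) · Pᴴ satisfies: γ(t) ∈ SU(n) and γ(t) commutes with every element of M for all t ∈ [0,1], γ(0) = e^{2πik/n}·1, and γ(1) = A. In particular A is joined to the central element e^{2πik/n}·1 by a path lying entirely in MSU(n). -/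
open Matrix

/-!
Every `γ t` is diagonal in the basis given by `P`, with the phase `t θ_j + (1 - t) c` in place of
`θ_j`. For `c` the mean of the phases, the sum of the phases does not depend on `t`, so
`det (γ t) = det A`. Since the `θ_j` lie in an interval on which the exponential is injective, equal
eigenvalues of `A` come from equal phases, hence remain equal along the path; so each eigenspace of
`A` lies in an eigenspace of `γ t`, and what commutes with `A` commutes with `γ t`.
-/

section DiagonalCommutant

variable {ι R : Type*} [Fintype ι] [DecidableEq ι] [CommSemiring R] [IsCancelMulZero R]
  {d e : ι → R} {B : Matrix ι ι R}

theorem commute_diagonal_iff :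
    Commute (diagonal d) B ↔ ∀ i j, B i j ≠ 0 → d i = d j := by
  simp only [commute_iff_eq, ← Matrix.ext_iff, diagonal_mul, mul_diagonal, mul_comm (d _),
    mul_eq_mul_left_iff, or_iff_not_imp_right, ne_eq]

theorem commute_diagonal_of_factorsThrough (he : e.FactorsThrough d)
    (h : Commute (diagonal d) B) : Commute (diagonal e) B :=
  commute_diagonal_iff.2 fun i j hij => he (commute_diagonal_iff.1 h i j hij)

end DiagonalCommutant

section PhaseMatrix

variable {ι : Type*} [Fintype ι] [DecidableEq ι]

/-- The unitary matrix `U · diag(e^{iφ_j}) · Uᴴ` with eigenbasis the columns of `U` and eigenvalue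
phases `φ`. It is phrased through the conjugation automorphism by `U`, so that products, scalars,
adjoints and commutation are transported from diagonal matrices. -/
noncomputable def phaseMatrix (U : unitaryGroup ι ℂ) (φ : ι → ℝ) : Matrix ι ι ℂ :=
  Unitary.conjStarAlgAut ℂ _ U (diagonal fun j => (Circle.exp (φ j) : ℂ))

variable (U : unitaryGroup ι ℂ)

theorem phaseMatrix_eq_mul (φ : ι → ℝ) :
    phaseMatrix U φ =
      U * diagonal (fun j => Complex.exp (Complex.I * φ j)) * (U : Matrix ι ι ℂ)ᴴ := by
  simp only [phaseMatrix, Unitary.conjStarAlgAut_apply, Circle.coe_exp, mul_comm Complex.I,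
    star_eq_conjTranspose]

theorem continuous_phaseMatrix : Continuous (phaseMatrix U) := by
  simp only [funext (phaseMatrix_eq_mul U)]
  fun_prop

theorem phaseMatrix_const (c : ℝ) :
    phaseMatrix U (fun _ => c) = Complex.exp (Complex.I * c) • (1 : Matrix ι ι ℂ) := by
  rw [phaseMatrix, ← smul_one_eq_diagonal, map_smul, map_one, Circle.coe_exp, mul_comm]

theorem phaseMatrix_mem_unitaryGroup (φ : ι → ℝ) : phaseMatrix U φ ∈ unitaryGroup ι ℂ := by
  refine Unitary.map_mem _ (mem_unitaryGroup_iff.2 ?_)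
  simp [star_eq_conjTranspose, diagonal_conjTranspose, Complex.mul_conj, -Circle.coe_exp]

theorem det_phaseMatrix (φ : ι → ℝ) :
    (phaseMatrix U φ).det = Complex.exp (Complex.I * ↑(∑ j, φ j)) := by
  have hU : (U : Matrix ι ι ℂ).det * (U : Matrix ι ι ℂ)ᴴ.det = 1 := by
    rw [← det_mul, ← star_eq_conjTranspose, mem_unitaryGroup_iff.1 U.2, det_one]
  rw [phaseMatrix_eq_mul, det_mul, det_mul, mul_right_comm, hU, one_mul, det_diagonal,
    ← Complex.exp_sum, ← Finset.mul_sum, Complex.ofReal_sum]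

variable {U}

theorem commute_phaseMatrix_of_factorsThrough {φ ψ : ι → ℝ} {B : Matrix ι ι ℂ}
    (hφ : Set.InjOn Circle.exp (Set.range φ)) (hψ : ψ.FactorsThrough φ)
    (h : Commute (phaseMatrix U φ) B) : Commute (phaseMatrix U ψ) B := by
  let conj := Unitary.conjStarAlgAut ℂ (Matrix ι ι ℂ) U
  obtain ⟨C, rfl⟩ : ∃ C, conj C = B := conj.surjective B
  have hC : Commute (diagonal fun j => (Circle.exp (φ j) : ℂ)) C :=
    (commute_map_iff conj.injective).1 h
  refine (commute_diagonal_of_factorsThrough (fun i j hij => ?_) hC).map conj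
  have hij : φ i = φ j := hφ ⟨i, rfl⟩ ⟨j, rfl⟩ (Circle.ext hij)
  simp only [hψ hij]

end PhaseMatrix

theorem sum_mul_add_one_sub_mul_eq_sum {ι R : Type*} [Fintype ι] [CommRing R] {f : ι → R} {c : R}
    (hc : ∑ j, f j = Fintype.card ι * c) (t : R) :
    ∑ j, (t * f j + (1 - t) * c) = ∑ j, f j := by
  rw [Finset.sum_add_distrib, ← Finset.mul_sum, Finset.sum_const, Finset.card_univ, nsmul_eq_mul,
    hc]
  ring

theorem path_to_center_in_MSU_general {ι : Type*} [Fintype ι] [DecidableEq ι]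
    (M : Set (Matrix ι ι ℂ)) (A P : Matrix ι ι ℂ) (θ : ι → ℝ) (c : ℝ)
    (hcomm : ∀ B ∈ M, A * B = B * A)
    (hP : P * Pᴴ = 1)
    (hθ : Set.InjOn Circle.exp (Set.range θ))
    (hA : A = P * diagonal (fun j => Complex.exp (Complex.I * θ j)) * Pᴴ)
    (hc : ∑ j, θ j = Fintype.card ι * c)
    (γ : ℝ → Matrix ι ι ℂ)
    (hγ : ∀ t : ℝ, γ t = P * diagonal (fun j =>
      Complex.exp (Complex.I * (t * θ j + (1 - t) * c))) * Pᴴ) :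
    Continuous γ ∧
    γ 0 = Complex.exp (Complex.I * c) • (1 : Matrix ι ι ℂ) ∧
    γ 1 = A ∧
    ∀ t, (γ t * (γ t)ᴴ = 1 ∧ (γ t).det = A.det) ∧ ∀ B ∈ M, γ t * B = B * γ t := by
  let U : unitaryGroup ι ℂ := ⟨P, mem_unitaryGroup_iff.2 hP⟩
  obtain rfl : A = phaseMatrix U θ := hA.trans (phaseMatrix_eq_mul U θ).symm
  obtain rfl : γ = fun t => phaseMatrix U fun j => t * θ j + (1 - t) * c :=
    funext fun t => by simp [hγ, phaseMatrix_eq_mul, U]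
  refine ⟨(continuous_phaseMatrix U).comp (by fun_prop), ?_, by simp, fun t => ⟨⟨?_, ?_⟩, ?_⟩⟩
  · simpa using phaseMatrix_const U c
  · exact mem_unitaryGroup_iff.1 (phaseMatrix_mem_unitaryGroup U _)
  · rw [det_phaseMatrix, det_phaseMatrix, sum_mul_add_one_sub_mul_eq_sum hc]
  · exact fun B hB => commute_phaseMatrix_of_factorsThrough hθ
      (fun i j hij => by simp only [hij]) (hcomm B hB)

/-- Let `M` be any set of `n × n` complex matrices and let `A ∈ SU(n)` commute
with every element of `M`.  Suppose `A = P D Pᴴ` with `P` unitary,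
`D = diag(e^{iθ_1},…,e^{iθ_n})`, all `θ_j ∈ [0, 2π)`, and `Σ θ_j = 2πk` with `0 ≤ k < n`.
Then `γ(t) = P · diag(e^{i(tθ_j + (1−t)·2πk/n)})_j · Pᴴ` is a path lying in `MSU(n)` from
the central element `e^{2πik/n}·1` to `A`. -/
theorem path_to_center_in_MSU (n : ℕ) (hn : 1 ≤ n)
    (M : Set (Matrix (Fin n) (Fin n) ℂ))
    (A P : Matrix (Fin n) (Fin n) ℂ)
    (θ : Fin n → ℝ) (k : ℕ) (hk : k < n)
    (hSU : A * Aᴴ = 1 ∧ A.det = 1)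
    (hcomm : ∀ B ∈ M, A * B = B * A)
    (hP : P * Pᴴ = 1)
    (hθ : ∀ j, θ j ∈ Set.Ico (0 : ℝ) (2 * Real.pi))
    (hA : A = P * Matrix.diagonal (fun j => Complex.exp (Complex.I * θ j)) * Pᴴ)
    (hsum : ∑ j, θ j = 2 * Real.pi * k)
    (γ : ℝ → Matrix (Fin n) (Fin n) ℂ)
    (hγ : ∀ t : ℝ, γ t = P * Matrix.diagonal (fun j =>
      Complex.exp (Complex.I * (t * θ j + (1 - t) * (2 * Real.pi * k / n)))) * Pᴴ) :
    ContinuousOn γ (Set.Icc 0 1) ∧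
    γ 0 = Complex.exp (Complex.I * (2 * Real.pi * k / n)) • (1 : Matrix (Fin n) (Fin n) ℂ) ∧
    γ 1 = A ∧
    ∀ t ∈ Set.Icc (0 : ℝ) 1,
      (γ t * (γ t)ᴴ = 1 ∧ (γ t).det = 1) ∧ ∀ B ∈ M, γ t * B = B * γ t := by
  have hc : ∑ j, θ j = Fintype.card (Fin n) * (2 * Real.pi * k / n) := by
    rw [hsum, Fintype.card_fin, mul_div_cancel₀ _ (Nat.cast_ne_zero.2 hk.ne_bot)]
  have hθ_inj : Set.InjOn Circle.exp (Set.range θ) :=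
    (Circle.exp_injOn_Ico (sub_zero _).le).mono (Set.range_subset_iff.2 hθ)
  obtain ⟨hcont, h0, h1, hmem⟩ :=
    path_to_center_in_MSU_general M A P θ _ hcomm hP hθ_inj hA hc γ (by simpa using hγ)
  exact ⟨hcont.continuousOn, by simpa using h0, h1, fun t _ => hSU.2 ▸ hmem t⟩
end

section
/- Let n ≥ 2 and let M be a set of n × n complex matrices each of which is a permutation matrix P_σ for some permutation σ of Fin n with σ(0) = 0 (every element of M fixes the basis index 0). Then for every k ∈ {0, 1, …, n−1} the central element e^{2πik/n}·1 of SU(n) is joined to the identity matrix by a continuous path lying entirely in MSU(n); explicitly, the path Γ(t) = diag(e^{it(2πk/n − 2πk)}, e^{it·2πk/n}, …, e^{it·2πk/n}) lies in SU(n), commutes with every element of M for all t ∈ [0,1], and satisfies Γ(0) = 1 and Γ(1) = e^{2πik/n}·1. -/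
open Matrix

/-!
Let `m : ι → ℤ` have sum `k`, and let `n` be the size of `ι`. The angles `2π (k / n - m j)` sum to
zero, so `t ↦ diag(exp (i t 2π (k / n - m j)))` stays in the special unitary group; they all agree
modulo `2π`, so at `t = 1` the matrix is scalar. A matrix which is block diagonal with respect to
the level sets of `m` commutes with the whole path. A permutation matrix fixing `0` is of this form
for `m = (k, 0, …, 0)`.
-/

theorem circle_coe_mem_unitary (z : Circle) : (z : ℂ) ∈ unitary ℂ := by
  rw [Unitary.mem_iff_self_mul_star, Complex.star_def, ← Circle.coe_inv_eq_conj, Circle.coe_inv,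
    mul_inv_cancel₀ z.coe_ne_zero]

section Diagonal

variable {ι α : Type*} [DecidableEq ι] [Fintype ι]

theorem diagonal_mem_unitaryGroup [CommRing α] [StarRing α] {d : ι → α}
    (hd : ∀ i, d i ∈ unitary α) : diagonal d ∈ unitaryGroup ι α := by
  rw [mem_unitaryGroup_iff, star_eq_conjTranspose, diagonal_conjTranspose,
    diagonal_mul_diagonal, ← diagonal_one]
  exact congrArg diagonal (funext fun i => Unitary.mul_star_self_of_mem (hd i))

theorem commute_diagonal_of_forall_ne_zero [NonUnitalNonAssocCommSemiring α] {d : ι → α}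
    {B : Matrix ι ι α} (h : ∀ i j, B i j ≠ 0 → d i = d j) : Commute (diagonal d) B := by
  ext i j
  rw [diagonal_mul, mul_diagonal, mul_comm]
  by_cases hB : B i j = 0
  · simp only [hB, zero_mul]
  · rw [h i j hB]

end Diagonal

theorem single_eq_single_of_graph_ne_zero {ι α R : Type*} [DecidableEq ι] [Zero α]
    [Zero R] [One R] {f : ι → ι} (hf : Function.Injective f) {i₀ : ι} (hi₀ : f i₀ = i₀)
    (a : α) {i j : ι}
    (hij : (Matrix.of fun x y => if x = f y then (1 : R) else 0) i j ≠ 0) :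
    (Pi.single i₀ a : ι → α) i = (Pi.single i₀ a : ι → α) j := by
  have hi : i = f j := of_not_not fun h => hij (if_neg h)
  simp only [hi, Pi.single_apply, hf.eq_iff' hi₀]

/-- The group `MSU(n)` of special unitary matrices commuting with every element of `M`, as a
submonoid of the full matrix ring. -/
def MSU {ι : Type*} [DecidableEq ι] [Fintype ι] (M : Set (Matrix ι ι ℂ)) :
    Submonoid (Matrix ι ι ℂ) :=
  specialUnitaryGroup ι ℂ ⊓ Submonoid.centralizer M

theorem mem_MSU_iff {ι : Type*} [DecidableEq ι] [Fintype ι] {M : Set (Matrix ι ι ℂ)}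
    {A : Matrix ι ι ℂ} :
    A ∈ MSU M ↔ (A * Aᴴ = 1 ∧ A.det = 1) ∧ ∀ B ∈ M, A * B = B * A := by
  rw [MSU, Submonoid.mem_inf, mem_specialUnitaryGroup_iff, mem_unitaryGroup_iff,
    star_eq_conjTranspose, Submonoid.mem_centralizer_iff]
  simp only [eq_comm]

/-- The one-parameter family `t ↦ diag(exp (i t θ j))` in the diagonal torus, with real angular
velocities `θ`. -/
noncomputable def diagonalRotation {ι : Type*} [DecidableEq ι] (θ : ι → ℝ) (t : ℝ) :
    Matrix ι ι ℂ :=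
  diagonal fun j => (Circle.exp (t * θ j) : ℂ)

/-- The angular velocities `2π (k / n - m j)`, where `k` is the sum of the integers `m j` and `n`
is their number: they sum to zero and are congruent modulo `2π`. -/
noncomputable def centralAngle {ι : Type*} [Fintype ι] (m : ι → ℤ) (j : ι) : ℝ :=
  2 * Real.pi * (∑ i, m i : ℤ) / Fintype.card ι - m j * (2 * Real.pi)

theorem sum_centralAngle {ι : Type*} [Fintype ι] [Nonempty ι] (m : ι → ℤ) :
    ∑ j, centralAngle m j = 0 := by
  have hcard : (Fintype.card ι : ℝ) ≠ 0 := Nat.cast_ne_zero.2 Fintype.card_ne_zero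
  simp only [centralAngle, Finset.sum_sub_distrib, Finset.sum_const, Finset.card_univ,
    nsmul_eq_mul, ← Finset.sum_mul, Int.cast_sum]
  field_simp
  ring

section DiagonalRotation

variable {ι : Type*} [DecidableEq ι]

theorem continuous_diagonalRotation (θ : ι → ℝ) : Continuous (diagonalRotation θ) := by
  unfold diagonalRotation
  fun_prop

theorem diagonalRotation_zero (θ : ι → ℝ) : diagonalRotation θ 0 = 1 := by
  simp [diagonalRotation]

variable [Fintype ι]

theorem diagonalRotation_mem_unitaryGroup (θ : ι → ℝ) (t : ℝ) :
    diagonalRotation θ t ∈ unitaryGroup ι ℂ :=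
  diagonal_mem_unitaryGroup fun j => circle_coe_mem_unitary (Circle.exp (t * θ j))

theorem det_diagonalRotation (θ : ι → ℝ) (t : ℝ) :
    (diagonalRotation θ t).det = Circle.exp (t * ∑ j, θ j) := by
  simp only [diagonalRotation, det_diagonal, Circle.coe_exp, Complex.ofReal_mul,
    Complex.ofReal_sum, Finset.mul_sum, Finset.sum_mul, Complex.exp_sum]

theorem diagonalRotation_mem_MSU {θ : ι → ℝ} (hθ : ∑ j, θ j = 0) {M : Set (Matrix ι ι ℂ)}
    (hM : ∀ B ∈ M, ∀ i j, B i j ≠ 0 → θ i = θ j) (t : ℝ) : diagonalRotation θ t ∈ MSU M := by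
  refine Submonoid.mem_inf.2 ⟨mem_specialUnitaryGroup_iff.2
    ⟨diagonalRotation_mem_unitaryGroup θ t, ?_⟩, fun B hB => ?_⟩
  · rw [det_diagonalRotation, hθ, mul_zero, Circle.exp_zero, Circle.coe_one]
  · refine (commute_diagonal_of_forall_ne_zero fun i j hij => ?_).symm
    rw [hM B hB i j hij]

theorem diagonalRotation_centralAngle_one (m : ι → ℤ) :
    diagonalRotation (centralAngle m) 1 =
      (Circle.exp (2 * Real.pi * (∑ i, m i : ℤ) / Fintype.card ι) : ℂ) • 1 := by
  simp only [diagonalRotation, centralAngle, one_mul, Circle.periodic_exp.sub_int_mul_eq,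
    smul_one_eq_diagonal]

theorem diagonalRotation_centralAngle_single (i₀ : ι) (k : ℤ) (t : ℝ) :
    diagonalRotation (centralAngle (Pi.single i₀ k)) t = diagonal fun j =>
      if j = i₀ then
        Complex.exp (Complex.I * (t * (2 * Real.pi * k / Fintype.card ι - 2 * Real.pi * k)))
      else Complex.exp (Complex.I * (t * (2 * Real.pi * k / Fintype.card ι))) := by
  refine congrArg diagonal (funext fun j => ?_)
  rw [Circle.coe_exp, mul_comm _ Complex.I]
  split_ifs with hj
  · simp [centralAngle, hj, mul_comm (k : ℂ)]
  · simp [centralAngle, hj]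

theorem center_connected_in_MSU_general [Nonempty ι] (m : ι → ℤ) (M : Set (Matrix ι ι ℂ))
    (hM : ∀ B ∈ M, ∀ i j, B i j ≠ 0 → m i = m j) :
    Continuous (diagonalRotation (centralAngle m)) ∧
    diagonalRotation (centralAngle m) 0 = 1 ∧
    diagonalRotation (centralAngle m) 1 =
      (Circle.exp (2 * Real.pi * (∑ i, m i : ℤ) / Fintype.card ι) : ℂ) • 1 ∧
    ∀ t, diagonalRotation (centralAngle m) t ∈ MSU M := by
  refine ⟨continuous_diagonalRotation _, diagonalRotation_zero _,
    diagonalRotation_centralAngle_one m,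
    diagonalRotation_mem_MSU (sum_centralAngle m) fun B hB i j hij => ?_⟩
  rw [centralAngle, centralAngle, hM B hB i j hij]

end DiagonalRotation

/-- Let `n ≥ 2` and let `M` be a set of `n × n` permutation matrices `P_σ`
with `σ 0 = 0`.  For every `0 ≤ k < n`, the explicit path
`Γ(t) = diag(e^{it(2πk/n − 2πk)}, e^{it·2πk/n}, …, e^{it·2πk/n})` is a continuous path lying
in `MSU(n)` joining the identity (`t = 0`) to the central element `e^{2πik/n}·1` (`t = 1`). -/
theorem center_connected_in_MSU (n : ℕ) [NeZero n] (hn : 2 ≤ n)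
    (M : Set (Matrix (Fin n) (Fin n) ℂ))
    (hM : ∀ B ∈ M, ∃ σ : Equiv.Perm (Fin n), σ 0 = 0 ∧
      B = Matrix.of fun x y => if x = σ y then (1 : ℂ) else 0)
    (k : ℕ) (hk : k < n)
    (Γ : ℝ → Matrix (Fin n) (Fin n) ℂ)
    (hΓ : ∀ t : ℝ, Γ t = Matrix.diagonal fun j =>
      if j = 0 then Complex.exp (Complex.I * (t * (2 * Real.pi * k / n - 2 * Real.pi * k)))
      else Complex.exp (Complex.I * (t * (2 * Real.pi * k / n)))) :
    Continuous Γ ∧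
    Γ 0 = 1 ∧
    Γ 1 = Complex.exp (Complex.I * (2 * Real.pi * k / n)) • (1 : Matrix (Fin n) (Fin n) ℂ) ∧
    ∀ t ∈ Set.Icc (0 : ℝ) 1,
      (Γ t * (Γ t)ᴴ = 1 ∧ (Γ t).det = 1) ∧ ∀ B ∈ M, Γ t * B = B * Γ t := by
  have hblock : ∀ B ∈ M, ∀ i j, B i j ≠ 0 →
      (Pi.single 0 (k : ℤ) : Fin n → ℤ) i = (Pi.single 0 (k : ℤ) : Fin n → ℤ) j := by
    intro B hB i j hij
    obtain ⟨σ, hσ, rfl⟩ := hM B hB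
    exact single_eq_single_of_graph_ne_zero σ.injective hσ _ hij
  obtain rfl : Γ = diagonalRotation (centralAngle (Pi.single 0 (k : ℤ))) := funext fun t => by
    rw [hΓ, diagonalRotation_centralAngle_single, Fintype.card_fin, Int.cast_natCast]
  obtain ⟨hcont, hzero, hone, hmem⟩ := center_connected_in_MSU_general _ M hblock
  refine ⟨hcont, hzero, ?_, fun t _ => mem_MSU_iff.1 (hmem t)⟩
  simpa [mul_comm Complex.I] using hone
end
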